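/- arXiv:1808.01922 — 2 statements merged into one kernel-verified Lean document; each statement's English description precedes it below -/
import Mathlib

section
/- Let A be a Hopf algebra over a field k with bijective antipode S and let P ∈ A be a right group-like projection. The following are equivalent: (1) P is a two-sided group-like projection; (2) S²(N_P) = N_P; (3) Δ(P) ∈ S(N_P) ⊗ N_P. Moreover, if P is a two-sided group-like projection then V_P = N_P = N_P^l = N_P^r. -/
open scoped TensorProduct

noncomputable section

variable (k : Type*) [Field k] {A : Type*} [Ring A] [HopfAlgebra k A]

/-- `P` is a right group-like projection: a nonzero idempotent with
`Δ(P)(1 ⊗ P) = P ⊗ P = (1 ⊗ P)Δ(P)`. -/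
def IsRightGroupLikeProjection (P : A) : Prop :=
  P ≠ 0 ∧ P * P = P ∧
    Coalgebra.comul (R := k) P * ((1 : A) ⊗ₜ[k] P) = P ⊗ₜ[k] P ∧
    ((1 : A) ⊗ₜ[k] P) * Coalgebra.comul (R := k) P = P ⊗ₜ[k] P

/-- `P` is a left group-like projection: a nonzero idempotent with
`Δ(P)(P ⊗ 1) = P ⊗ P = (P ⊗ 1)Δ(P)`. -/
def IsLeftGroupLikeProjection (P : A) : Prop :=
  P ≠ 0 ∧ P * P = P ∧
    Coalgebra.comul (R := k) P * (P ⊗ₜ[k] (1 : A)) = P ⊗ₜ[k] P ∧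
    (P ⊗ₜ[k] (1 : A)) * Coalgebra.comul (R := k) P = P ⊗ₜ[k] P

/-- A two-sided group-like projection. -/
def IsTwoSidedGroupLikeProjection (P : A) : Prop :=
  IsRightGroupLikeProjection k P ∧ IsLeftGroupLikeProjection k P

/-- `N_P^l = {x : (1 ⊗ P)Δ(x) = x ⊗ P}`. -/
def NPlSet (P : A) : Set A :=
  {x : A | ((1 : A) ⊗ₜ[k] P) * Coalgebra.comul (R := k) x = x ⊗ₜ[k] P}

/-- `N_P^r = {x : Δ(x)(1 ⊗ P) = x ⊗ P}`. -/
def NPrSet (P : A) : Set A :=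
  {x : A | Coalgebra.comul (R := k) x * ((1 : A) ⊗ₜ[k] P) = x ⊗ₜ[k] P}

/-- `N_P = N_P^l ∩ N_P^r`. -/
def NPSet (P : A) : Set A := NPlSet k P ∩ NPrSet k P

/-- `V_P = {(μ ⊗ id)(Δ(P)) : μ ∈ A*}`, the smallest left coideal containing `P`. -/
def VPSet (P : A) : Set A :=
  {x : A | ∃ μ : A →ₗ[k] k,
    x = TensorProduct.lid k A ((TensorProduct.map μ LinearMap.id) (Coalgebra.comul (R := k) P))}

/-- A submodule `N ⊆ A` is a left coideal if `Δ(N) ⊆ A ⊗ N`. -/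
def IsLeftCoideal (N : Submodule k A) : Prop :=
  ∀ x ∈ N, Coalgebra.comul (R := k) x ∈
    LinearMap.range (TensorProduct.map (LinearMap.id : A →ₗ[k] A) N.subtype)

/-- A subalgebra `N ⊆ A` is a left coideal subalgebra if `Δ(N) ⊆ A ⊗ N`. -/
def IsLeftCoidealSubalgebra (N : Subalgebra k A) : Prop :=
  IsLeftCoideal k (Subalgebra.toSubmodule N)

open Coalgebra HopfAlgebra TensorProduct

section TensorTools

variable {k}

/-- The slice map `(μ ⊗ id) : M ⊗ N → N` of a linear functional `μ` on `M`. -/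
def leftSlice {M N : Type*} [AddCommGroup M] [Module k M] [AddCommGroup N] [Module k N]
    (μ : M →ₗ[k] k) : M ⊗[k] N →ₗ[k] N :=
  (TensorProduct.lid k N).toLinearMap ∘ₗ TensorProduct.map μ LinearMap.id

section Modules

variable {M N N' : Type*} [AddCommGroup M] [Module k M] [AddCommGroup N] [Module k N]
  [AddCommGroup N'] [Module k N']

@[simp]
lemma leftSlice_tmul (μ : M →ₗ[k] k) (m : M) (n : N) : leftSlice μ (m ⊗ₜ[k] n) = μ m • n := by
  simp [leftSlice]

lemma leftSlice_map (μ : M →ₗ[k] k) (f : M →ₗ[k] M) (g : N →ₗ[k] N') (t : M ⊗[k] N) :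
    leftSlice μ (TensorProduct.map f g t) = g (leftSlice (μ ∘ₗ f) t) := by
  induction t with
  | zero => simp
  | tmul a b => simp
  | add a b ha hb => simp only [map_add, ha, hb]

lemma eq_of_leftSlice_eq {s t : M ⊗[k] N} (h : ∀ μ : M →ₗ[k] k, leftSlice μ s = leftSlice μ t) :
    s = t := by
  let b := Module.Free.chooseBasis k M
  apply (TensorProduct.equivFinsuppOfBasisLeft (N := N) b).injective
  ext i
  rw [TensorProduct.equivFinsuppOfBasisLeft_apply, TensorProduct.equivFinsuppOfBasisLeft_apply]
  exact h (b.coord i)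

lemma map_eq_self_of_leftSlice_mem {W : Submodule k N} {q : N →ₗ[k] N} (hq : ∀ x ∈ W, q x = x)
    {t : M ⊗[k] N} (ht : ∀ μ : M →ₗ[k] k, leftSlice μ t ∈ W) :
    TensorProduct.map LinearMap.id q t = t :=
  eq_of_leftSlice_eq fun μ => by rw [leftSlice_map, LinearMap.comp_id, hq _ (ht μ)]

/-- A tensor whose left and right slices lie in `W` and `U` lies in `U ⊗ W`. -/
lemma mem_range_map_subtype {U : Submodule k M} {W : Submodule k N} {t : M ⊗[k] N}
    (hU : ∀ ν : N →ₗ[k] k, leftSlice ν (TensorProduct.comm k M N t) ∈ U)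
    (hW : ∀ μ : M →ₗ[k] k, leftSlice μ t ∈ W) :
    t ∈ LinearMap.range (TensorProduct.map U.subtype W.subtype) := by
  obtain ⟨p, hp⟩ := U.subtype.exists_leftInverse_of_injective U.ker_subtype
  obtain ⟨q, hq⟩ := W.subtype.exists_leftInverse_of_injective W.ker_subtype
  have hp' : ∀ x ∈ U, (U.subtype ∘ₗ p) x = x := fun x hx =>
    congrArg Subtype.val (LinearMap.congr_fun hp ⟨x, hx⟩)
  have hq' : ∀ x ∈ W, (W.subtype ∘ₗ q) x = x := fun x hx =>
    congrArg Subtype.val (LinearMap.congr_fun hq ⟨x, hx⟩)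
  have h₁ := map_eq_self_of_leftSlice_mem hq' hW
  have h₂ := map_eq_self_of_leftSlice_mem hp' hU
  rw [TensorProduct.map_comm] at h₂
  have h₃ := (TensorProduct.comm k M N).injective h₂
  refine ⟨TensorProduct.map p q t, ?_⟩
  conv_rhs => rw [← h₃, ← h₁]
  simp only [← LinearMap.comp_apply, ← TensorProduct.map_comp, LinearMap.id_comp,
    LinearMap.comp_id]

end Modules

section Algebras

variable {B : Type*} [Ring B] [Algebra k B]

lemma leftSlice_one_tmul_mul (μ : B →ₗ[k] k) (x : B) (t : B ⊗[k] B) :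
    leftSlice μ ((1 ⊗ₜ[k] x) * t) = x * leftSlice μ t := by
  induction t with
  | zero => simp
  | tmul a b => simp
  | add a b ha hb => simp only [mul_add, map_add, ha, hb]

lemma leftSlice_mul_one_tmul (μ : B →ₗ[k] k) (x : B) (t : B ⊗[k] B) :
    leftSlice μ (t * (1 ⊗ₜ[k] x)) = leftSlice μ t * x := by
  induction t with
  | zero => simp
  | tmul a b => simp
  | add a b ha hb => simp only [add_mul, map_add, ha, hb]

lemma leftSlice_tmul_one_mul (μ : B →ₗ[k] k) (x : B) (t : B ⊗[k] B) :
    leftSlice μ ((x ⊗ₜ[k] 1) * t) = leftSlice (μ ∘ₗ LinearMap.mulLeft k x) t := by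
  induction t with
  | zero => simp
  | tmul a b => simp
  | add a b ha hb => simp only [mul_add, map_add, ha, hb]

lemma leftSlice_mul_tmul_one (μ : B →ₗ[k] k) (x : B) (t : B ⊗[k] B) :
    leftSlice μ (t * (x ⊗ₜ[k] 1)) = leftSlice (μ ∘ₗ LinearMap.mulRight k x) t := by
  induction t with
  | zero => simp
  | tmul a b => simp
  | add a b ha hb => simp only [add_mul, map_add, ha, hb]

/-- For a linear map `f` with values in `B`, the map `a ⊗ t ↦ (f a ⊗ 1) t`. -/
def leftLegMul (f : B →ₗ[k] B) : B ⊗[k] (B ⊗[k] B) →ₗ[k] B ⊗[k] B :=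
  TensorProduct.lift
    (LinearMap.mul k (B ⊗[k] B) ∘ₗ (TensorProduct.mk k B B).flip 1 ∘ₗ f)

@[simp]
lemma leftLegMul_tmul (f : B →ₗ[k] B) (a : B) (t : B ⊗[k] B) :
    leftLegMul f (a ⊗ₜ[k] t) = (f a ⊗ₜ[k] 1) * t := rfl

/-- For a linear map `f` with values in `B`, the map `a ⊗ t ↦ t (f a ⊗ 1)`. -/
def rightLegMul (f : B →ₗ[k] B) : B ⊗[k] (B ⊗[k] B) →ₗ[k] B ⊗[k] B :=
  TensorProduct.lift
    ((LinearMap.mul k (B ⊗[k] B)).flip ∘ₗ (TensorProduct.mk k B B).flip 1 ∘ₗ f)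

@[simp]
lemma rightLegMul_tmul (f : B →ₗ[k] B) (a : B) (t : B ⊗[k] B) :
    rightLegMul f (a ⊗ₜ[k] t) = t * (f a ⊗ₜ[k] 1) := rfl

end Algebras

end TensorTools

section Antipode

variable {k}

local notation "S" => antipode k (A := A)
local notation "Δ" => comul (R := k) (A := A)

lemma leftLegMul_antipode_comul (x : A) :
    leftLegMul S (LinearMap.lTensor A Δ (Δ x)) = 1 ⊗ₜ[k] x := by
  rw [← coassoc_apply]
  have key : leftLegMul S ∘ₗ (TensorProduct.assoc k A A A).toLinearMap =
      (LinearMap.mul' k A ∘ₗ LinearMap.rTensor A S).rTensor A := by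
    ext a b c
    simp
  have h := LinearMap.congr_fun key (LinearMap.rTensor A Δ (Δ x))
  simp only [LinearMap.comp_apply, LinearEquiv.coe_coe] at h
  rw [h, ← LinearMap.comp_apply, ← LinearMap.rTensor_comp, LinearMap.comp_assoc,
    mul_antipode_rTensor_comul, LinearMap.rTensor_comp, LinearMap.comp_apply,
    rTensor_counit_comul]
  simp

lemma inverse_antipode_comul {T : A →ₗ[k] A} (hS : Function.Injective S)
    (hT : ∀ a, S (T a) = a) :
    LinearMap.mul' k A ∘ₗ (TensorProduct.comm k A A).toLinearMap ∘ₗ T.rTensor A ∘ₗ Δ =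
      Algebra.linearMap k A ∘ₗ counit := by
  ext x
  apply hS
  have key : S ∘ₗ LinearMap.mul' k A ∘ₗ (TensorProduct.comm k A A).toLinearMap ∘ₗ T.rTensor A =
      LinearMap.mul' k A ∘ₗ LinearMap.lTensor A S := by
    ext a b
    simp [antipode_mul_antidistrib, hT]
  have h := LinearMap.congr_fun key (Δ x)
  simp only [LinearMap.comp_apply] at h ⊢
  rw [h, mul_antipode_lTensor_comul_apply]
  simp [Algebra.algebraMap_eq_smul_one]

lemma rightLegMul_inverse_antipode_comul {T : A →ₗ[k] A} (hS : Function.Injective S)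
    (hT : ∀ a, S (T a) = a) (x : A) :
    rightLegMul T (LinearMap.lTensor A Δ (Δ x)) = 1 ⊗ₜ[k] x := by
  rw [← coassoc_apply]
  have key : rightLegMul T ∘ₗ (TensorProduct.assoc k A A A).toLinearMap =
      (LinearMap.mul' k A ∘ₗ (TensorProduct.comm k A A).toLinearMap ∘ₗ T.rTensor A).rTensor A := by
    ext a b c
    simp
  have h := LinearMap.congr_fun key (LinearMap.rTensor A Δ (Δ x))
  simp only [LinearMap.comp_apply, LinearEquiv.coe_coe] at h
  rw [h, ← LinearMap.comp_apply, ← LinearMap.rTensor_comp, LinearMap.comp_assoc,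
    LinearMap.comp_assoc, inverse_antipode_comul hS hT, LinearMap.rTensor_comp,
    LinearMap.comp_apply, rTensor_counit_comul]
  simp

/-- The antipode reverses the comultiplication. -/
lemma comul_antipode (x : A) :
    Δ (S x) = TensorProduct.map S S (TensorProduct.comm k A A (Δ x)) := by
  let G : A →ₗ[k] A ⊗[k] A :=
    TensorProduct.map S S ∘ₗ (TensorProduct.comm k A A).toLinearMap ∘ₗ Δ
  have hG : WithConv.toConv G * WithConv.toConv Δ = 1 := by
    apply WithConv.ext
    ext1 y
    let Θ : A ⊗[k] (A ⊗[k] A) →ₗ[k] A ⊗[k] A := TensorProduct.lift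
      (LinearMap.mul k (A ⊗[k] A) ∘ₗ TensorProduct.mk k A A 1 ∘ₗ S)
    have hΘ : LinearMap.mul' k (A ⊗[k] A) ∘ₗ TensorProduct.map
        (TensorProduct.map S S ∘ₗ (TensorProduct.comm k A A).toLinearMap) Δ =
        Θ ∘ₗ (leftLegMul S ∘ₗ LinearMap.lTensor A Δ).lTensor A ∘ₗ
          (TensorProduct.assoc k A A A).toLinearMap := by
      ext a b c
      simp [Θ, ← mul_assoc]
    have h := LinearMap.congr_fun hΘ (LinearMap.rTensor A Δ (Δ y))
    simp only [LinearMap.comp_apply, LinearEquiv.coe_coe] at h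
    have hcomp : leftLegMul S ∘ₗ LinearMap.lTensor A Δ ∘ₗ Δ = TensorProduct.mk k A A 1 := by
      ext1 z
      exact leftLegMul_antipode_comul z
    rw [coassoc_apply, ← LinearMap.comp_apply (LinearMap.lTensor A _), ← LinearMap.lTensor_comp,
      LinearMap.comp_assoc, hcomp] at h
    have hΘ' : Θ ∘ₗ (TensorProduct.mk k A A 1).lTensor A =
        TensorProduct.mk k A A 1 ∘ₗ LinearMap.mul' k A ∘ₗ LinearMap.rTensor A S := by
      ext a b
      simp [Θ]
    have h' := LinearMap.congr_fun hΘ' (Δ y)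
    simp only [LinearMap.comp_apply] at h'
    rw [h', mul_antipode_rTensor_comul_apply] at h
    have hmap : TensorProduct.map
        (TensorProduct.map S S ∘ₗ (TensorProduct.comm k A A).toLinearMap) Δ (LinearMap.rTensor A Δ (Δ y)) =
        TensorProduct.map G Δ (Δ y) := by
      rw [← LinearMap.comp_apply, LinearMap.map_comp_rTensor]
      rfl
    rw [hmap] at h
    simp only [LinearMap.convMul_def, LinearMap.convOne_def, LinearMap.comp_apply]
    refine h.trans ?_
    simp [Algebra.algebraMap_eq_smul_one, Algebra.TensorProduct.one_def]
  have hFG := left_inv_eq_right_inv hG (LinearMap.comul_right_inv (R := k) (C := A))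
  exact (LinearMap.congr_fun (WithConv.toConv_injective hFG) x).symm

lemma leftLegMul_comul_mul (x p : A) :
    leftLegMul S (LinearMap.lTensor A Δ (Δ x * (1 ⊗ₜ[k] p))) = (1 ⊗ₜ[k] x) * Δ p := by
  rw [← leftLegMul_antipode_comul x]
  induction Δ x with
  | zero => simp
  | tmul a b => simp [Bialgebra.comul_mul, mul_assoc]
  | add a b ha hb => simp only [add_mul, map_add, ha, hb]

lemma rightLegMul_mul_comul {T : A →ₗ[k] A} (hS : Function.Injective S)
    (hT : ∀ a, S (T a) = a) (x p : A) :
    rightLegMul T (LinearMap.lTensor A Δ ((1 ⊗ₜ[k] p) * Δ x)) = Δ p * (1 ⊗ₜ[k] x) := by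
  rw [← rightLegMul_inverse_antipode_comul hS hT x]
  induction Δ x with
  | zero => simp
  | tmul a b => simp [Bialgebra.comul_mul, mul_assoc]
  | add a b ha hb => simp only [mul_add, map_add, ha, hb]

end Antipode

section Projections

variable {k}

local notation "S" => antipode k (A := A)
local notation "Δ" => comul (R := k) (A := A)

lemma leftSlice_counit_comul (x : A) : leftSlice counit (Δ x) = x := by
  have h := congrArg (TensorProduct.lid k A) (rTensor_counit_comul (R := k) x)
  simp only [TensorProduct.lid_tmul, one_smul] at h
  exact h

variable (k) in
/-- The algebra map `id ⊗ ε : A ⊗ A → A`. -/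
def rightCounit : A ⊗[k] A →ₐ[k] A :=
  (Algebra.TensorProduct.rid k k A).toAlgHom.comp
    (Algebra.TensorProduct.map (AlgHom.id k A) (Bialgebra.counitAlgHom k A))

@[simp]
lemma rightCounit_tmul (a b : A) : rightCounit k (a ⊗ₜ[k] b) = counit (R := k) b • a := by
  simp [rightCounit]

@[simp]
lemma rightCounit_comul (x : A) : rightCounit k (Δ x) = x := by
  have h := congrArg (TensorProduct.rid k A) (lTensor_counit_comul (R := k) x)
  simp only [TensorProduct.rid_tmul, one_smul] at h
  exact h

variable {P x : A}

lemma one_tmul_mul_comul_of_mem_NPrSet (hx : x ∈ NPrSet k P) :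
    (1 ⊗ₜ[k] x) * Δ P = (S x ⊗ₜ[k] 1) * Δ P := by
  have hx' : Δ x * (1 ⊗ₜ[k] P) = x ⊗ₜ[k] P := hx
  rw [← leftLegMul_comul_mul, hx']
  simp

lemma comul_mul_one_tmul_of_mem_NPlSet {T : A →ₗ[k] A} (hS : Function.Injective S)
    (hT : ∀ a, S (T a) = a) (hx : x ∈ NPlSet k P) :
    Δ P * (1 ⊗ₜ[k] x) = Δ P * (T x ⊗ₜ[k] 1) := by
  have hx' : (1 ⊗ₜ[k] P) * Δ x = x ⊗ₜ[k] P := hx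
  rw [← rightLegMul_mul_comul hS hT, hx']
  simp

lemma antipode_mul_of_mem_NPrSet (hx : x ∈ NPrSet k P) :
    S x * P = counit (R := k) x • P := by
  have h := congrArg (rightCounit k) (one_tmul_mul_comul_of_mem_NPrSet hx)
  simpa using h.symm

lemma mul_inverse_antipode_of_mem_NPlSet {T : A →ₗ[k] A} (hS : Function.Injective S)
    (hT : ∀ a, S (T a) = a) (hx : x ∈ NPlSet k P) :
    P * T x = counit (R := k) x • P := by
  have h := congrArg (rightCounit k) (comul_mul_one_tmul_of_mem_NPlSet hS hT hx)
  simpa using h.symm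

/-- The left coideal `V_P` as a submodule. -/
def VPSubmodule (P : A) : Submodule k A where
  carrier := VPSet k P
  zero_mem' := ⟨0, by simp⟩
  add_mem' := by
    rintro _ _ ⟨μ, rfl⟩ ⟨ν, rfl⟩
    exact ⟨μ + ν, by simp [TensorProduct.map_add_left]⟩
  smul_mem' := by
    rintro c _ ⟨μ, rfl⟩
    exact ⟨c • μ, by simp [TensorProduct.map_smul_left]⟩

lemma leftSlice_mem_VPSubmodule (P : A) (μ : A →ₗ[k] k) :
    leftSlice μ (Δ P) ∈ VPSubmodule (k := k) P :=
  ⟨μ, rfl⟩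

/-- `N_P^r` is a left coideal. -/
lemma leftSlice_mem_NPrSet (hx : x ∈ NPrSet k P) (μ : A →ₗ[k] k) :
    leftSlice μ (Δ x) ∈ NPrSet k P := by
  have hx' : Δ x * (1 ⊗ₜ[k] P) = x ⊗ₜ[k] P := hx
  let ρ := LinearMap.mulRight k ((1 : A) ⊗ₜ[k] P)
  let τ := (TensorProduct.mk k A A).flip P
  have key : LinearMap.lTensor A ρ ∘ₗ (TensorProduct.assoc k A A A).toLinearMap ∘ₗ
      LinearMap.rTensor A Δ =
      (TensorProduct.assoc k A A A).toLinearMap ∘ₗ LinearMap.rTensor A Δ ∘ₗ ρ := by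
    ext a b
    simp only [ρ, TensorProduct.AlgebraTensorModule.curry_apply, TensorProduct.curry_apply,
      LinearMap.coe_restrictScalars, LinearMap.comp_apply, LinearMap.rTensor_tmul,
      LinearEquiv.coe_coe, LinearMap.mulRight_apply, Algebra.TensorProduct.tmul_mul_tmul, mul_one]
    induction Δ a with
    | zero => simp
    | tmul c d => simp
    | add s t hs ht => simp only [TensorProduct.add_tmul, map_add, hs, ht]
  have hτ (t : A ⊗[k] A) :
      TensorProduct.assoc k A A A (t ⊗ₜ[k] P) = LinearMap.lTensor A τ t := by
    induction t with
    | zero => simp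
    | tmul a b => simp [τ]
    | add s t hs ht => simp only [TensorProduct.add_tmul, map_add, hs, ht]
  have h := LinearMap.congr_fun key (Δ x)
  simp only [LinearMap.comp_apply, LinearEquiv.coe_coe] at h
  rw [coassoc_apply, LinearMap.mulRight_apply, hx', LinearMap.rTensor_tmul, hτ] at h
  have h' := congrArg (leftSlice μ) h
  simpa [LinearMap.lTensor, leftSlice_map, ρ, τ] using! h'

/-- `N_P^l` is a left coideal. -/
lemma leftSlice_mem_NPlSet (hx : x ∈ NPlSet k P) (μ : A →ₗ[k] k) :
    leftSlice μ (Δ x) ∈ NPlSet k P := by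
  have hx' : (1 ⊗ₜ[k] P) * Δ x = x ⊗ₜ[k] P := hx
  let ρ := LinearMap.mulLeft k ((1 : A) ⊗ₜ[k] P)
  let τ := (TensorProduct.mk k A A).flip P
  have key : LinearMap.lTensor A ρ ∘ₗ (TensorProduct.assoc k A A A).toLinearMap ∘ₗ
      LinearMap.rTensor A Δ =
      (TensorProduct.assoc k A A A).toLinearMap ∘ₗ LinearMap.rTensor A Δ ∘ₗ ρ := by
    ext a b
    simp only [ρ, TensorProduct.AlgebraTensorModule.curry_apply, TensorProduct.curry_apply,
      LinearMap.coe_restrictScalars, LinearMap.comp_apply, LinearMap.rTensor_tmul,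
      LinearEquiv.coe_coe, LinearMap.mulLeft_apply, Algebra.TensorProduct.tmul_mul_tmul, one_mul]
    induction Δ a with
    | zero => simp
    | tmul c d => simp
    | add s t hs ht => simp only [TensorProduct.add_tmul, map_add, hs, ht]
  have hτ (t : A ⊗[k] A) :
      TensorProduct.assoc k A A A (t ⊗ₜ[k] P) = LinearMap.lTensor A τ t := by
    induction t with
    | zero => simp
    | tmul a b => simp [τ]
    | add s t hs ht => simp only [TensorProduct.add_tmul, map_add, hs, ht]
  have h := LinearMap.congr_fun key (Δ x)
  simp only [LinearMap.comp_apply, LinearEquiv.coe_coe] at h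
  rw [coassoc_apply, LinearMap.mulLeft_apply, hx', LinearMap.rTensor_tmul, hτ] at h
  have h' := congrArg (leftSlice μ) h
  simpa [LinearMap.lTensor, leftSlice_map, ρ, τ] using! h'

lemma mul_mem_VPSubmodule {v : A} (hx : x ∈ NPrSet k P) (hv : v ∈ VPSubmodule (k := k) P) :
    x * v ∈ VPSubmodule (k := k) P := by
  obtain ⟨μ, rfl⟩ := hv
  change x * leftSlice μ (Δ P) ∈ _
  rw [← leftSlice_one_tmul_mul, one_tmul_mul_comul_of_mem_NPrSet hx, leftSlice_tmul_one_mul]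
  exact leftSlice_mem_VPSubmodule _ _

lemma VPSubmodule_mul_mem (hS : Function.Bijective S) {v : A} (hx : x ∈ NPlSet k P)
    (hv : v ∈ VPSubmodule (k := k) P) : v * x ∈ VPSubmodule (k := k) P := by
  obtain ⟨μ, rfl⟩ := hv
  change leftSlice μ (Δ P) * x ∈ _
  rw [← leftSlice_mul_one_tmul, comul_mul_one_tmul_of_mem_NPlSet hS.injective
    (LinearEquiv.ofBijective S hS).apply_symm_apply (T := (LinearEquiv.ofBijective S hS).symm) hx,
    leftSlice_mul_tmul_one]
  exact leftSlice_mem_VPSubmodule _ _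

namespace IsRightGroupLikeProjection

lemma mem_NPrSet (hP : IsRightGroupLikeProjection k P) : P ∈ NPrSet k P := hP.2.2.1

lemma mem_NPlSet (hP : IsRightGroupLikeProjection k P) : P ∈ NPlSet k P := hP.2.2.2

lemma VPSet_subset_NPSet (hP : IsRightGroupLikeProjection k P) : VPSet k P ⊆ NPSet k P := by
  rintro _ ⟨μ, rfl⟩
  exact ⟨leftSlice_mem_NPlSet hP.mem_NPlSet μ, leftSlice_mem_NPrSet hP.mem_NPrSet μ⟩

lemma counit_eq_one (hP : IsRightGroupLikeProjection k P) : counit (R := k) P = 1 := by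
  have h := congrArg (leftSlice counit) hP.2.2.1
  rw [leftSlice_mul_one_tmul, leftSlice_counit_comul, leftSlice_tmul, hP.2.1] at h
  have h' : (counit (R := k) P - 1) • P = 0 := by rw [sub_smul, one_smul, ← h, sub_self]
  exact sub_eq_zero.mp ((smul_eq_zero.mp h').resolve_right hP.1)

lemma antipode_mul_self (hP : IsRightGroupLikeProjection k P) : S P * P = P := by
  rw [antipode_mul_of_mem_NPrSet hP.mem_NPrSet, hP.counit_eq_one, one_smul]

lemma mul_antipode_self (hP : IsRightGroupLikeProjection k P) : P * S P = S P := by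
  have hmul (t : A ⊗[k] A) : LinearMap.mul' k A (LinearMap.lTensor A S ((1 ⊗ₜ[k] P) * t)) =
      LinearMap.mul' k A (LinearMap.lTensor A S t) * S P := by
    induction t with
    | zero => simp
    | tmul a b => simp [antipode_mul_antidistrib, mul_assoc]
    | add a b ha hb => simp only [mul_add, add_mul, map_add, ha, hb]
  have h := hmul (Δ P)
  rw [hP.2.2.2, mul_antipode_lTensor_comul_apply, hP.counit_eq_one] at h
  simpa using h

lemma comul_eq_map_antipode (h : S P = P) :
    TensorProduct.map S S (TensorProduct.comm k A A (Δ P)) = Δ P := by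
  rw [← comul_antipode, h]

/-- A right group-like projection fixed by the antipode is two-sided. -/
lemma isTwoSided_of_antipode_eq (hP : IsRightGroupLikeProjection k P) (h : S P = P) :
    IsTwoSidedGroupLikeProjection k P := by
  have hF (s t : A ⊗[k] A) : TensorProduct.map S S (TensorProduct.comm k A A (s * t)) =
      TensorProduct.map S S (TensorProduct.comm k A A t) *
        TensorProduct.map S S (TensorProduct.comm k A A s) := by
    induction s with
    | zero => simp
    | add a b ha hb => simp only [mul_add, add_mul, map_add, ha, hb]
    | tmul a b =>
      induction t with
      | zero => simp
      | tmul c d => simp [antipode_mul_antidistrib]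
      | add c d hc hd => simp only [mul_add, add_mul, map_add, hc, hd]
  refine ⟨hP, hP.1, hP.2.1, ?_, ?_⟩
  · have h' := hF (1 ⊗ₜ[k] P) (Δ P)
    rw [hP.2.2.2, comul_eq_map_antipode h] at h'
    simpa [h] using h'.symm
  · have h' := hF (Δ P) (1 ⊗ₜ[k] P)
    rw [hP.2.2.1, comul_eq_map_antipode h] at h'
    simpa [h] using h'.symm

lemma antipode_eq_of_comul_mul (hP : IsRightGroupLikeProjection k P)
    (h : Δ P * (P ⊗ₜ[k] 1) = P ⊗ₜ[k] P) : S P = P := by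
  have hmul (t : A ⊗[k] A) : LinearMap.mul' k A (LinearMap.rTensor A S (t * (P ⊗ₜ[k] 1))) =
      S P * LinearMap.mul' k A (LinearMap.rTensor A S t) := by
    induction t with
    | zero => simp
    | tmul a b => simp [antipode_mul_antidistrib, mul_assoc]
    | add a b ha hb => simp only [mul_add, add_mul, map_add, ha, hb]
  have h' := hmul (Δ P)
  rw [h, mul_antipode_rTensor_comul_apply, hP.counit_eq_one] at h'
  simpa [hP.antipode_mul_self] using h'.symm

lemma antipode_eq_of_image_antipode_antipode (hP : IsRightGroupLikeProjection k P)
    (hS : Function.Bijective S) (h : (fun a => S (S a)) '' NPSet k P = NPSet k P) : S P = P := by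
  have hmem : S (S P) ∈ NPSet k P := h ▸ ⟨P, ⟨hP.mem_NPlSet, hP.mem_NPrSet⟩, rfl⟩
  have h' := mul_inverse_antipode_of_mem_NPlSet hS.injective
    (LinearEquiv.ofBijective S hS).apply_symm_apply (T := (LinearEquiv.ofBijective S hS).symm)
    hmem.1
  have hsymm : (LinearEquiv.ofBijective S hS).symm (S (S P)) = S P :=
    (LinearEquiv.ofBijective S hS).symm_apply_apply (S P)
  rw [LinearEquiv.coe_coe, hsymm, hP.mul_antipode_self] at h'
  simpa [hP.counit_eq_one] using h'

lemma antipode_eq_of_comul_mem (hP : IsRightGroupLikeProjection k P)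
    (h : Δ P ∈ LinearMap.range (TensorProduct.map
      ((Submodule.span k (NPSet k P)).map S).subtype
      (Submodule.span k (NPSet k P)).subtype)) : S P = P := by
  apply hP.antipode_eq_of_comul_mul
  have hspan : ∀ x ∈ Submodule.span k (NPSet k P), S x * P = counit (R := k) x • P := by
    intro x hx
    induction hx using Submodule.span_induction with
    | mem x hx => exact antipode_mul_of_mem_NPrSet hx.2
    | zero => simp
    | add x y _ _ hx hy => simp only [map_add, add_mul, add_smul, hx, hy]
    | smul c x _ hx => simp [hx, mul_smul]
  suffices hmul : ∀ t ∈ LinearMap.range (TensorProduct.map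
      ((Submodule.span k (NPSet k P)).map S).subtype (Submodule.span k (NPSet k P)).subtype),
      t * (P ⊗ₜ[k] 1) = P ⊗ₜ[k] leftSlice counit t by
    rw [hmul _ h, leftSlice_counit_comul]
  rintro _ ⟨u, rfl⟩
  induction u with
  | zero => simp
  | tmul a b =>
    obtain ⟨_, x, hx, rfl⟩ := a
    simp [hspan x hx, TensorProduct.smul_tmul]
  | add a b ha hb => simp only [map_add, add_mul, TensorProduct.tmul_add, ha, hb]

lemma leftSlice_comm_mem (h : S P = P) (ν : A →ₗ[k] k) :
    leftSlice ν (TensorProduct.comm k A A (Δ P)) ∈ (VPSubmodule (k := k) P).map S := by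
  refine ⟨leftSlice (ν ∘ₗ S) (Δ P), leftSlice_mem_VPSubmodule _ _, ?_⟩
  rw [← leftSlice_map]
  conv_rhs => rw [← comul_eq_map_antipode h, TensorProduct.map_comm]
  simp

lemma comul_mem_range_map (h : S P = P) :
    Δ P ∈ LinearMap.range (TensorProduct.map
      ((VPSubmodule (k := k) P).map S).subtype (VPSubmodule (k := k) P).subtype) :=
  mem_range_map_subtype (leftSlice_comm_mem h) (leftSlice_mem_VPSubmodule P)

lemma map_antipode_antipode_comul (h : S P = P) :
    TensorProduct.map (S ∘ₗ S) (S ∘ₗ S) (Δ P) = Δ P := by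
  conv_rhs => rw [← comul_eq_map_antipode h]
  conv_rhs => rw [← comul_eq_map_antipode h, ← TensorProduct.map_comm]
  simp [TensorProduct.map_comp]

lemma image_antipode_antipode_VPSet (hS : Function.Bijective S) (h : S P = P) :
    (fun a => S (S a)) '' VPSet k P = VPSet k P := by
  have hslice (μ : A →ₗ[k] k) : S (S (leftSlice (μ ∘ₗ S ∘ₗ S) (Δ P))) = leftSlice μ (Δ P) := by
    conv_rhs => rw [← map_antipode_antipode_comul h, leftSlice_map]
    rfl
  apply Set.Subset.antisymm
  · rintro _ ⟨_, ⟨μ, rfl⟩, rfl⟩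
    let e := LinearEquiv.ofBijective S hS
    refine ⟨μ ∘ₗ e.symm.toLinearMap ∘ₗ e.symm.toLinearMap, ?_⟩
    refine Eq.trans ?_ (hslice _)
    have he : (μ ∘ₗ e.symm.toLinearMap ∘ₗ e.symm.toLinearMap) ∘ₗ S ∘ₗ S = μ := by
      ext a
      have he' (b : A) : e.symm (S b) = b := e.symm_apply_apply b
      simp [he']
    rw [he]
    rfl
  · rintro _ ⟨μ, rfl⟩
    exact ⟨_, leftSlice_mem_VPSubmodule P (μ ∘ₗ S ∘ₗ S), hslice μ⟩

lemma one_mem_VPSubmodule (hP : IsRightGroupLikeProjection k P) (hS : Function.Bijective S)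
    (h : S P = P) : 1 ∈ VPSubmodule (k := k) P := by
  have hone : LinearMap.mul' k A (LinearMap.rTensor A S (Δ P)) = 1 := by
    rw [mul_antipode_rTensor_comul_apply, hP.counit_eq_one, map_one]
  rw [← hone]
  obtain ⟨u, hu⟩ := comul_mem_range_map h
  rw [← hu]
  clear hu
  induction u with
  | zero => simp
  | tmul a b =>
    obtain ⟨_, x, hx, rfl⟩ := a
    have hx' : S (S x) ∈ VPSet k P :=
      image_antipode_antipode_VPSet hS h ▸ Set.mem_image_of_mem (fun a => S (S a)) hx
    simpa using mul_mem_VPSubmodule (hP.VPSet_subset_NPSet hx').2 b.2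
  | add a b ha hb =>
    simp only [map_add]
    exact add_mem ha hb

end IsRightGroupLikeProjection

lemma IsTwoSidedGroupLikeProjection.antipode_eq (hP : IsTwoSidedGroupLikeProjection k P) :
    S P = P :=
  hP.1.antipode_eq_of_comul_mul hP.2.2.2.1

lemma IsTwoSidedGroupLikeProjection.sets_eq (hP : IsTwoSidedGroupLikeProjection k P)
    (hS : Function.Bijective S) :
    VPSet k P = NPSet k P ∧ NPlSet k P = NPSet k P ∧ NPrSet k P = NPSet k P := by
  have hone := hP.1.one_mem_VPSubmodule hS hP.antipode_eq
  have hV := hP.1.VPSet_subset_NPSet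
  have hl : NPlSet k P ⊆ VPSet k P := fun x hx => by
    simpa using! VPSubmodule_mul_mem hS hx hone
  have hr : NPrSet k P ⊆ VPSet k P := fun x hx => by
    simpa using! mul_mem_VPSubmodule hx hone
  exact ⟨hV.antisymm fun x hx => hl hx.1, (hl.trans hV).antisymm fun x hx => hx.1,
    (hr.trans hV).antisymm fun x hx => hx.2⟩

end Projections

/-- Theorem: for a right group-like projection `P` the following are equivalent:
(1) `P` is two-sided; (2) `S²(N_P) = N_P`; (3) `Δ(P) ∈ S(N_P) ⊗ N_P`.
Moreover if `P` is two-sided then `V_P = N_P = N_P^l = N_P^r`. -/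
theorem statement8
    (hS : Function.Bijective (HopfAlgebra.antipode (R := k) : A →ₗ[k] A))
    (P : A) (hP : IsRightGroupLikeProjection k P) :
    (IsTwoSidedGroupLikeProjection k P ↔
      (fun a => HopfAlgebra.antipode (R := k) (HopfAlgebra.antipode (R := k) a)) ''
        NPSet k P = NPSet k P) ∧
    (IsTwoSidedGroupLikeProjection k P ↔
      Coalgebra.comul (R := k) P ∈ LinearMap.range (TensorProduct.map
        ((Submodule.span k (NPSet k P)).map (HopfAlgebra.antipode (R := k))).subtype
        (Submodule.span k (NPSet k P)).subtype)) ∧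
    (IsTwoSidedGroupLikeProjection k P →
      VPSet k P = NPSet k P ∧ NPlSet k P = NPSet k P ∧ NPrSet k P = NPSet k P) := by
  refine ⟨⟨fun h => ?_, fun h => ?_⟩, ⟨fun h => ?_, fun h => ?_⟩, fun h => h.sets_eq hS⟩
  · rw [← (h.sets_eq hS).1]
    exact IsRightGroupLikeProjection.image_antipode_antipode_VPSet hS h.antipode_eq
  · exact hP.isTwoSided_of_antipode_eq (hP.antipode_eq_of_image_antipode_antipode hS h)
  · have hspan : Submodule.span k (NPSet k P) = VPSubmodule P := by
      rw [← (h.sets_eq hS).1]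
      exact Submodule.span_eq (VPSubmodule P)
    rw [hspan]
    exact IsRightGroupLikeProjection.comul_mem_range_map h.antipode_eq
  · exact hP.isTwoSided_of_antipode_eq (hP.antipode_eq_of_comul_mem h)
end
end

section
/- Let A be a Hopf algebra over a field k with bijective antipode and let P ∈ A be a right group-like projection. Then the left coideal V_P is faithful as a right ideal over N_P^l, faithful as a left ideal over N_P^r, and faithful both as a left and as a right ideal over N_P; in particular, if x ∈ N_P^r satisfies x·v = 0 for all v ∈ V_P, then x = 0. -/
open scoped TensorProduct

noncomputable section

variable (k : Type*) [Field k] {A : Type*} [Ring A] [HopfAlgebra k A]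

open Coalgebra HopfAlgebra

/-- `Δ(P)` has a representation whose right legs all lie in `V_P`. -/
lemma exists_repr_right_mem_VPSet (P : A) :
    ∃ r : Repr k P (Module.Basis.ofVectorSpaceIndex k A), ∀ i, r.right i ∈ VPSet k P := by
  classical
  let e := Module.Basis.ofVectorSpace k A
  let c := TensorProduct.equivFinsuppOfBasisLeft e (comul (R := k) P)
  refine ⟨⟨c.support, e, c, ?_⟩, fun i => ⟨e.coord i, ?_⟩⟩
  · change c.sum (fun i n => e i ⊗ₜ n) = _
    rw [← TensorProduct.equivFinsuppOfBasisLeft_symm_apply, LinearEquiv.symm_apply_apply]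
  · exact TensorProduct.equivFinsuppOfBasisLeft_apply e _ i

lemma IsRightGroupLikeProjection.counit_eq_one_s9 {P : A} (hP : IsRightGroupLikeProjection k P) :
    counit (R := k) P = 1 := by
  obtain ⟨hne, hidem, hmul, -⟩ := hP
  have h := congrArg (fun t => TensorProduct.lid k A ((counit (R := k)).rTensor A t)) hmul
  have hleft (t : A ⊗[k] A) :
      TensorProduct.lid k A ((counit (R := k)).rTensor A (t * ((1 : A) ⊗ₜ[k] P))) =
        TensorProduct.lid k A ((counit (R := k)).rTensor A t) * P := by
    induction t with
    | zero => simp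
    | tmul a b => simp
    | add s t hs ht => rw [add_mul, map_add, map_add, hs, ht, map_add, map_add, add_mul]
  simp only [hleft, rTensor_counit_comul, TensorProduct.lid_tmul, LinearMap.rTensor_tmul,
    one_smul, hidem] at h
  exact (smul_left_injective k hne (by simpa using h)).symm

/-- `V_P · x = 0` forces `x = 0` as soon as `ε(P) = 1`. -/
lemma eq_zero_of_forall_VPSet_mul_eq_zero {P x : A} (hP : counit (R := k) P = 1)
    (hx : ∀ v ∈ VPSet k P, v * x = 0) : x = 0 := by
  obtain ⟨r, hr⟩ := exists_repr_right_mem_VPSet k P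
  have h := sum_antipode_mul_eq_algebraMap_counit r
  rw [hP, map_one] at h
  rw [← one_mul x, ← h, Finset.sum_mul]
  exact Finset.sum_eq_zero fun i _ => by rw [mul_assoc, hx _ (hr i), mul_zero]

/-- `x · V_P = 0` forces `x = 0` as soon as `ε(P) = 1` and the antipode is bijective. -/
lemma eq_zero_of_forall_mul_VPSet_eq_zero
    (hS : Function.Bijective (antipode k : A →ₗ[k] A)) {P x : A} (hP : counit (R := k) P = 1)
    (hx : ∀ v ∈ VPSet k P, x * v = 0) : x = 0 := by
  obtain ⟨r, hr⟩ := exists_repr_right_mem_VPSet k P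
  choose T hT using hS.surjective
  have h : ∑ i ∈ r.index, r.right i * T (r.left i) = 1 := by
    apply hS.injective
    simp only [map_sum, antipode_mul_antidistrib, hT, antipode_one]
    rw [sum_mul_antipode_eq_algebraMap_counit r, hP, map_one]
  rw [← mul_one x, ← h, Finset.mul_sum]
  exact Finset.sum_eq_zero fun i _ => by rw [← mul_assoc, hx _ (hr i), zero_mul]

/-- Theorem: `V_P` is faithful as a right ideal over `N_P^l` (`V_P·x = 0 ⇒ x = 0`),
faithful as a left ideal over `N_P^r` (`x·V_P = 0 ⇒ x = 0`), and faithful as a left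
and as a right ideal over `N_P`. -/
theorem statement9
    (hS : Function.Bijective (HopfAlgebra.antipode (R := k) : A →ₗ[k] A))
    (P : A) (hP : IsRightGroupLikeProjection k P) :
    (∀ x ∈ NPlSet k P, (∀ v ∈ VPSet k P, v * x = 0) → x = 0) ∧
    (∀ x ∈ NPrSet k P, (∀ v ∈ VPSet k P, x * v = 0) → x = 0) ∧
    (∀ x ∈ NPSet k P,
      ((∀ v ∈ VPSet k P, x * v = 0) → x = 0) ∧
      ((∀ v ∈ VPSet k P, v * x = 0) → x = 0)) := by
  have hε := hP.counit_eq_one_s9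
  exact ⟨fun _ _ => eq_zero_of_forall_VPSet_mul_eq_zero k hε,
    fun _ _ => eq_zero_of_forall_mul_VPSet_eq_zero k hS hε,
    fun _ _ => ⟨eq_zero_of_forall_mul_VPSet_eq_zero k hS hε,
      eq_zero_of_forall_VPSet_mul_eq_zero k hε⟩⟩
end
end
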